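/- Consider problem (P1) with two constraints and n > 3. Assume: (a) there exists x₀ with g_1(x₀) < 0 and g_2(x₀) < 0 (Slater condition); (b) the zero vector is not feasible, i.e. g_1(0) > 0 or g_2(0) > 0; (c) there is no KKT point (x, γ_1, γ_2) with γ_1 > 0 and γ_2 = 0; (d) there is no KKT point (x, γ_1, γ_2) with γ_1 = 0 and γ_2 > 0. Then there exists a KKT point (x*, γ_1, γ_2) of (P1) with γ_1 > 0 and γ_2 > 0. -/

import Mathlib

open Matrix

/-- KKT point of problem (P1): `x` with multipliers `γ₁, γ₂ ≥ 0` satisfying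
stationarity, complementarity, dual feasibility and primal feasibility, where
`g_k x = a_k ‖x‖² + b_kᵀ x + c_k` and `w = 1 + 2γ₁a₁ + 2γ₂a₂`. -/
def IsKKTP1 (n : ℕ) (a1 a2 : ℝ) (b1 b2 : Fin n → ℝ) (c1 c2 : ℝ)
    (x : Fin n → ℝ) (γ1 γ2 : ℝ) : Prop :=
  0 ≤ γ1 ∧ 0 ≤ γ2 ∧
  (1 + 2 * γ1 * a1 + 2 * γ2 * a2) • x = -(γ1 • b1 + γ2 • b2) ∧
  γ1 * (a1 * (x ⬝ᵥ x) + b1 ⬝ᵥ x + c1) = 0 ∧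
  γ2 * (a2 * (x ⬝ᵥ x) + b2 ⬝ᵥ x + c2) = 0 ∧
  0 ≤ 1 + 2 * γ1 * a1 + 2 * γ2 * a2 ∧
  a1 * (x ⬝ᵥ x) + b1 ⬝ᵥ x + c1 ≤ 0 ∧
  a2 * (x ⬝ᵥ x) + b2 ⬝ᵥ x + c2 ≤ 0

/-!
Writing `t` for `‖x‖²` makes the objective and the constraints affine in `(x, t)`; relaxing
`‖x‖² = t` to `‖x‖² ≤ t` gives a convex program, whose minimizer `(x, t)` has Lagrange multipliers
`γ` by Slater's condition. Minimality of the Lagrangian over the epigraph `‖x‖² ≤ t` yields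
`w ≥ 0`, `w x = -∑ γᵢ bᵢ` and `w (t - ‖x‖²) = 0`. If the `bᵢ` are linearly independent then `w ≠ 0`,
so the relaxation is tight. Otherwise, when there are at most `dim E` constraints, some direction
is orthogonal to every `bᵢ`, and moving `x` along it makes the relaxation tight at no cost. So there
is always a KKT point, and the other assumptions leave only multipliers that are both positive.
-/

open Module Set
open scoped RealInnerProductSpace

lemma isOpen_setOf_exists_forall_lt {α ι : Type*} [Finite ι] (s : Set α) (h : ι → α → ℝ) :
    IsOpen {y : ι → ℝ | ∃ x ∈ s, ∀ i, h i x < y i} := by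
  simp only [ofPred_exists, ofPred_and, ofPred_forall]
  exact isOpen_iUnion fun x ↦ isOpen_const.inter <| isOpen_iInter_of_finite fun i ↦
    isOpen_lt continuous_const (continuous_apply i)

section Alternative

variable {E ι : Type*} [AddCommGroup E] [Module ℝ E] {s : Set E}

lemma convex_setOf_exists_forall_lt {h : ι → E → ℝ} (hh : ∀ i, ConvexOn ℝ s (h i)) :
    Convex ℝ {y : ι → ℝ | ∃ x ∈ s, ∀ i, h i x < y i} := by
  rcases isEmpty_or_nonempty ι with _ | ⟨⟨i₀⟩⟩
  · exact subsingleton_of_subsingleton.convex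
  rintro y ⟨x, hx, hxy⟩ y' ⟨x', hx', hxy'⟩ α β hα hβ hαβ
  exact ⟨α • x + β • x', (hh i₀).1 hx hx' hα hβ hαβ, fun i ↦
    ((hh i).convex_strict_epigraph (x := (x, y i)) ⟨hx, hxy i⟩ (y := (x', y' i)) ⟨hx', hxy' i⟩
      hα hβ hαβ).2⟩

lemma nonneg_of_forall_pos_add_mul_pos {a b : ℝ} (h : ∀ r > 0, 0 < a + r * b) : 0 ≤ b := by
  by_contra! hb
  have hr := h ((|a| + 1) / -b) (div_pos (by positivity) (neg_pos.2 hb))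
  have hcancel : (|a| + 1) / -b * b = -(|a| + 1) := by
    rw [div_neg, neg_mul, div_mul_cancel₀ _ hb.ne]
  linarith [le_abs_self a]

/-- Fan's theorem of the alternative for finitely many convex functions. -/
theorem exists_nonneg_forall_sum_mul_nonneg [Fintype ι] {h : ι → E → ℝ}
    (hs : s.Nonempty) (hh : ∀ i, ConvexOn ℝ s (h i)) (hno : ∀ x ∈ s, ∃ i, 0 ≤ h i x) :
    ∃ l : ι → ℝ, 0 ≤ l ∧ l ≠ 0 ∧ ∀ x ∈ s, 0 ≤ ∑ i, l i * h i x := by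
  classical
  obtain ⟨f, hf⟩ := geometric_hahn_banach_point_open (convex_setOf_exists_forall_lt hh)
    (isOpen_setOf_exists_forall_lt s h) (x := 0) fun ⟨x, hx, hneg⟩ ↦
      let ⟨i, hi⟩ := hno x hx; (hneg i).not_ge hi
  have f_pos (x) (hx : x ∈ s) (y : ι → ℝ) (hy : ∀ i, h i x < y i) : 0 < f y := by
    simpa only [map_zero] using hf y ⟨x, hx, hy⟩
  have f_eq_sum (y : ι → ℝ) : f y = ∑ i, f (Pi.single i 1) * y i := by
    conv_lhs => rw [pi_eq_sum_univ' y, map_sum]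
    simp only [map_smul, smul_eq_mul, mul_comm]
  obtain ⟨x₀, hx₀⟩ := hs
  set y₀ : ι → ℝ := fun i ↦ h i x₀ + 1
  refine ⟨fun i ↦ f (Pi.single i 1), fun i ↦ ?_, fun hzero ↦ ?_, fun x hx ↦ ?_⟩
  · refine nonneg_of_forall_pos_add_mul_pos (a := f y₀) fun r hr ↦ ?_
    have hsingle : 0 ≤ (Pi.single i 1 : ι → ℝ) := Pi.single_nonneg.2 zero_le_one
    rw [← smul_eq_mul, ← map_smul, ← map_add]
    exact f_pos x₀ hx₀ _ fun j ↦ (lt_add_one _).trans_le <|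
      le_add_of_nonneg_right (mul_nonneg hr.le (hsingle j))
  · have : 0 < f y₀ := f_pos x₀ hx₀ _ fun i ↦ lt_add_one _
    rw [f_eq_sum, Finset.sum_eq_zero fun i _ ↦ mul_eq_zero_of_left (congrFun hzero i) _] at this
    exact this.false
  · have hlim : Filter.Tendsto (fun ε : ℝ ↦ f fun i ↦ h i x + ε) (nhdsWithin 0 (Ioi 0))
        (nhds (f fun i ↦ h i x)) := by
      refine tendsto_nhdsWithin_of_tendsto_nhds (Continuous.tendsto' (by fun_prop) _ _ ?_)
      simp only [add_zero]
    rw [← f_eq_sum]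
    exact ge_of_tendsto hlim <| eventually_nhdsWithin_of_forall fun ε hε ↦
      (f_pos x hx _ fun i ↦ lt_add_of_pos_right _ hε).le

theorem exists_lagrange_multipliers [Fintype ι] {f : E → ℝ} {g : ι → E → ℝ} {m : ℝ}
    (hf : ConvexOn ℝ s f) (hg : ∀ i, ConvexOn ℝ s (g i)) (hslater : ∃ x ∈ s, ∀ i, g i x < 0)
    (hm : ∀ x ∈ s, (∀ i, g i x ≤ 0) → m ≤ f x) :
    ∃ γ : ι → ℝ, 0 ≤ γ ∧ ∀ x ∈ s, m ≤ f x + ∑ i, γ i * g i x := by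
  obtain ⟨x₀, hx₀, hneg⟩ := hslater
  obtain ⟨l, hl, hl_ne, hsum⟩ := exists_nonneg_forall_sum_mul_nonneg (s := s)
    (h := fun o : Option ι ↦ o.elim (fun x ↦ f x + -m) g) ⟨x₀, hx₀⟩
    (Option.rec (hf.add_const (-m)) hg) fun x hx ↦ by
      by_contra! hlt
      have := hm x hx fun i ↦ (hlt (some i)).le
      linarith [show f x + -m < 0 from hlt none]
  simp only [Fintype.sum_option, Option.elim] at hsum
  -- Were the multiplier of `f` zero, the Slater point would force all the others to vanish.
  have l_none_pos : 0 < l none := by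
    refine (hl none).lt_of_ne' fun hnone ↦ hl_ne ?_
    have hterm : ∀ i ∈ Finset.univ, l (some i) * g i x₀ ≤ 0 := fun i _ ↦
      mul_nonpos_of_nonneg_of_nonpos (hl _) (hneg i).le
    have hsum_zero := (Finset.sum_nonpos hterm).antisymm (by simpa [hnone] using hsum x₀ hx₀)
    funext o
    cases o with
    | none => exact hnone
    | some i =>
      exact (mul_eq_zero.1 <| (Finset.sum_eq_zero_iff_of_nonpos hterm).1 hsum_zero i
        (Finset.mem_univ i)).resolve_right (hneg i).ne
  refine ⟨fun i ↦ l (some i) / l none, fun i ↦ div_nonneg (hl _) l_none_pos.le, fun x hx ↦ ?_⟩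
  have := div_nonneg (hsum x hx) l_none_pos.le
  rw [add_div, mul_div_cancel_left₀ _ l_none_pos.ne', Finset.sum_div] at this
  simp only [div_mul_eq_mul_div]
  linarith

end Alternative

section Relaxation

variable {E ι : Type*} [NormedAddCommGroup E] [InnerProductSpace ℝ E]

lemma smul_eq_neg_of_forall_quadratic_le {w : ℝ} {d x : E}
    (h : ∀ y, w * ‖x‖ ^ 2 + 2 * ⟪d, x⟫ ≤ w * ‖y‖ ^ 2 + 2 * ⟪d, y⟫) : w • x = -d := by
  have hderiv : HasFDerivAt (fun y : E ↦ w * ‖y‖ ^ 2 + 2 * ⟪d, y⟫)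
      (w • 2 • innerSL ℝ x + (2 : ℝ) • innerSL ℝ d) x :=
    ((hasStrictFDerivAt_norm_sq x).hasFDerivAt.const_mul w).add
      ((innerSL ℝ d).hasFDerivAt.const_mul 2)
  have hzero := IsLocalMin.hasFDerivAt_eq_zero (Filter.Eventually.of_forall h) hderiv
  refine eq_neg_of_add_eq_zero_left (ext_inner_right ℝ fun v ↦ ?_)
  have := DFunLike.congr_fun hzero v
  simp only [_root_.add_apply, _root_.smul_apply, _root_.zero_apply, innerSL_apply_apply,
    smul_eq_mul, nsmul_eq_mul] at this
  rw [inner_add_left, real_inner_smul_left, inner_zero_left]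
  push_cast at this
  linarith

lemma stationarity_of_forall_epigraph_le {w t : ℝ} {d x : E} (hxt : ‖x‖ ^ 2 ≤ t)
    (h : ∀ y s, ‖y‖ ^ 2 ≤ s → w * t + 2 * ⟪d, x⟫ ≤ w * s + 2 * ⟪d, y⟫) :
    0 ≤ w ∧ w • x = -d ∧ w * t = w * ‖x‖ ^ 2 := by
  have hw : 0 ≤ w := by linarith [h x (t + 1) (by linarith)]
  have hslack : w * t = w * ‖x‖ ^ 2 :=
    le_antisymm (by linarith [h x _ le_rfl]) (mul_le_mul_of_nonneg_left hxt hw)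
  exact ⟨hw, smul_eq_neg_of_forall_quadratic_le fun y ↦ hslack ▸ h y _ le_rfl, hslack⟩

lemma exists_norm_sq_eq_and_inner_eq {V : Submodule ℝ E} [V.HasOrthogonalProjection]
    (hV : V ≠ ⊤) {x : E} {t : ℝ} (hxt : ‖x‖ ^ 2 ≤ t) :
    ∃ z : E, ‖z‖ ^ 2 = t ∧ ∀ v ∈ V, ⟪v, z⟫ = ⟪v, x⟫ := by
  obtain ⟨e, he, he_ne⟩ := Submodule.exists_mem_ne_zero_of_ne_bot
    (mt V.orthogonal_eq_bot_iff.1 hV)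
  set y := V.starProjection x
  have hyt : 0 ≤ t - ‖y‖ ^ 2 := by
    have : ‖y‖ ^ 2 ≤ ‖x‖ ^ 2 := by gcongr; exact V.norm_starProjection_apply_le x
    linarith
  set r := √(t - ‖y‖ ^ 2) / ‖e‖
  have hre : ‖r • e‖ ^ 2 = t - ‖y‖ ^ 2 := by
    rw [norm_smul, Real.norm_of_nonneg (by positivity),
      div_mul_cancel₀ _ (norm_ne_zero_iff.2 he_ne), Real.sq_sqrt hyt]
  have hy : ⟪y, r • e⟫ = 0 := by
    rw [real_inner_smul_right, he y (V.starProjection_apply_mem x), mul_zero]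
  refine ⟨y + r • e, ?_, fun v hv ↦ ?_⟩
  · rw [norm_add_sq_real, hy, hre]
    ring
  · have hproj : ⟪v, x - y⟫ = 0 := V.sub_starProjection_mem_orthogonal x v hv
    rw [inner_sub_right] at hproj
    rw [inner_add_right, real_inner_smul_right, he v hv]
    linarith

/-- The feasible set of the convex relaxation of (P1), in the variables `(x, t)`: the equation
`t = ‖x‖²` that would make it equivalent to (P1) is relaxed to `‖x‖² ≤ t`. -/
def relaxedFeasibleSet (a : ι → ℝ) (b : ι → E) (c : ι → ℝ) : Set (E × ℝ) :=
  {p | ‖p.1‖ ^ 2 ≤ p.2 ∧ ∀ i, a i * p.2 + ⟪b i, p.1⟫ + c i ≤ 0}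

/-- Coordinate-free KKT points of minimizing `½‖x‖²` subject to finitely many constraints
`a i * ‖x‖² + ⟪b i, x⟫ + c i ≤ 0`; for two constraints on `ℝⁿ` this is `IsKKTP1`. -/
structure IsKKTPoint [Fintype ι] (a : ι → ℝ) (b : ι → E) (c : ι → ℝ) (x : E) (γ : ι → ℝ) :
    Prop where
  multiplier_nonneg : 0 ≤ γ
  stationarity : (1 + 2 * ∑ i, γ i * a i) • x = -∑ i, γ i • b i
  complementarity : ∀ i, γ i * (a i * ‖x‖ ^ 2 + ⟪b i, x⟫ + c i) = 0
  dual_feasibility : 0 ≤ 1 + 2 * ∑ i, γ i * a i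
  primal_feasibility : ∀ i, a i * ‖x‖ ^ 2 + ⟪b i, x⟫ + c i ≤ 0

variable {a : ι → ℝ} {b : ι → E} {c : ι → ℝ}

lemma relaxedFeasibleSet_nonempty_of_slater
    (hslater : ∃ x₀, ∀ i, a i * ‖x₀‖ ^ 2 + ⟪b i, x₀⟫ + c i < 0) :
    (relaxedFeasibleSet a b c).Nonempty :=
  let ⟨x₀, hx₀⟩ := hslater
  ⟨(x₀, ‖x₀‖ ^ 2), le_rfl, fun i ↦ (hx₀ i).le⟩

lemma isClosed_relaxedFeasibleSet : IsClosed (relaxedFeasibleSet a b c) := by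
  simp only [relaxedFeasibleSet, ofPred_and, ofPred_forall]
  exact (isClosed_le (by fun_prop) (by fun_prop)).inter <| isClosed_iInter fun i ↦
    isClosed_le (by fun_prop) (by fun_prop)

lemma exists_isMinOn_snd_relaxedFeasibleSet [FiniteDimensional ℝ E]
    (hne : (relaxedFeasibleSet a b c).Nonempty) :
    ∃ p ∈ relaxedFeasibleSet a b c, IsMinOn Prod.snd (relaxedFeasibleSet a b c) p := by
  obtain ⟨p₀, hp₀⟩ := hne
  have : ProperSpace E := FiniteDimensional.proper_real E
  have hcompact : IsCompact (Metric.closedBall (0 : E) √p₀.2 ×ˢ Icc 0 p₀.2) :=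
    (isCompact_closedBall _ _).prod isCompact_Icc
  refine continuous_snd.continuousOn.exists_isMinOn' isClosed_relaxedFeasibleSet hp₀ ?_
  filter_upwards [Filter.mem_inf_of_left hcompact.compl_mem_cocompact,
    Filter.mem_inf_of_right (Filter.mem_principal_self _)] with p hp hpF
  by_contra! hlt
  refine hp ⟨?_, (sq_nonneg _).trans hpF.1, hlt.le⟩
  exact mem_closedBall_zero_iff.2 (Real.le_sqrt_of_sq_le (hpF.1.trans hlt.le))

variable [Fintype ι]

lemma exists_multipliers_of_isMinOn_snd
    (hslater : ∃ x₀, ∀ i, a i * ‖x₀‖ ^ 2 + ⟪b i, x₀⟫ + c i < 0) {p : E × ℝ}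
    (hmin : IsMinOn Prod.snd (relaxedFeasibleSet a b c) p) :
    ∃ γ : ι → ℝ, 0 ≤ γ ∧ ∀ y s, ‖y‖ ^ 2 ≤ s →
      2⁻¹ * p.2 ≤ 2⁻¹ * s + ∑ i, γ i * (a i * s + ⟪b i, y⟫ + c i) := by
  obtain ⟨x₀, hx₀⟩ := hslater
  set epi : Set (E × ℝ) := {q | ‖q.1‖ ^ 2 ≤ q.2}
  have hepi : Convex ℝ epi := by
    simpa using (convexOn_univ_norm.pow (fun _ _ ↦ norm_nonneg _) 2).convex_epigraph
  have hobjective : ConvexOn ℝ epi fun q ↦ 2⁻¹ * q.2 :=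
    ((2⁻¹ : ℝ) • LinearMap.snd ℝ E ℝ).convexOn hepi
  have hconstraint (i : ι) : ConvexOn ℝ epi fun q ↦ a i * q.2 + ⟪b i, q.1⟫ + c i :=
    ((a i • LinearMap.snd ℝ E ℝ + innerₛₗ ℝ (b i) ∘ₗ LinearMap.fst ℝ E ℝ).convexOn
      hepi).add_const (c i)
  obtain ⟨γ, hγ, hL⟩ := exists_lagrange_multipliers hobjective hconstraint
    ⟨(x₀, ‖x₀‖ ^ 2), le_refl (‖x₀‖ ^ 2), hx₀⟩ (m := 2⁻¹ * p.2) fun q hq hqF ↦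
      mul_le_mul_of_nonneg_left (hmin ⟨hq, hqF⟩) (by norm_num)
  exact ⟨γ, hγ, fun y s hys ↦ hL (y, s) hys⟩

lemma two_mul_lagrangian_eq (a : ι → ℝ) (b : ι → E) (c γ : ι → ℝ) (x : E) (t : ℝ) :
    2 * (2⁻¹ * t + ∑ i, γ i * (a i * t + ⟪b i, x⟫ + c i)) =
      (1 + 2 * ∑ i, γ i * a i) * t + 2 * ⟪∑ i, γ i • b i, x⟫ + 2 * ∑ i, γ i * c i := by
  simp only [sum_inner, real_inner_smul_left, mul_add, Finset.sum_add_distrib, ← mul_assoc,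
    ← Finset.sum_mul]
  ring

lemma exists_relaxed_kkt_of_isMinOn_snd
    (hslater : ∃ x₀, ∀ i, a i * ‖x₀‖ ^ 2 + ⟪b i, x₀⟫ + c i < 0) {x : E} {t : ℝ}
    (hxt : (x, t) ∈ relaxedFeasibleSet a b c)
    (hmin : IsMinOn Prod.snd (relaxedFeasibleSet a b c) (x, t)) :
    ∃ γ : ι → ℝ, 0 ≤ γ ∧ (∀ i, γ i * (a i * t + ⟪b i, x⟫ + c i) = 0) ∧
      0 ≤ 1 + 2 * ∑ i, γ i * a i ∧ (1 + 2 * ∑ i, γ i * a i) • x = -∑ i, γ i • b i ∧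
      (1 + 2 * ∑ i, γ i * a i) * t = (1 + 2 * ∑ i, γ i * a i) * ‖x‖ ^ 2 := by
  obtain ⟨γ, hγ, hL⟩ := exists_multipliers_of_isMinOn_snd hslater hmin
  have hterm : ∀ i ∈ Finset.univ, γ i * (a i * t + ⟪b i, x⟫ + c i) ≤ 0 := fun i _ ↦
    mul_nonpos_of_nonneg_of_nonpos (hγ i) (hxt.2 i)
  have hsum : ∑ i, γ i * (a i * t + ⟪b i, x⟫ + c i) = 0 :=
    (Finset.sum_nonpos hterm).antisymm (le_add_iff_nonneg_right _ |>.1 (hL x t hxt.1))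
  refine ⟨γ, hγ, fun i ↦ (Finset.sum_eq_zero_iff_of_nonpos hterm).1 hsum i (Finset.mem_univ i),
    stationarity_of_forall_epigraph_le hxt.1 fun y s hys ↦ ?_⟩
  have hx := two_mul_lagrangian_eq a b c γ x t
  have hy := two_mul_lagrangian_eq a b c γ y s
  linarith [hL y s hys]

lemma exists_isKKTPoint_of_linearIndependent [FiniteDimensional ℝ E] (hb : LinearIndependent ℝ b)
    (hslater : ∃ x₀, ∀ i, a i * ‖x₀‖ ^ 2 + ⟪b i, x₀⟫ + c i < 0) :
    ∃ x γ, IsKKTPoint a b c x γ := by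
  obtain ⟨⟨x, t⟩, hxt, hmin⟩ := exists_isMinOn_snd_relaxedFeasibleSet
    (relaxedFeasibleSet_nonempty_of_slater hslater)
  obtain ⟨γ, hγ, hcompl, hdual, hstat, hslack⟩ :=
    exists_relaxed_kkt_of_isMinOn_snd hslater hxt hmin
  have hw : 1 + 2 * ∑ i, γ i * a i ≠ 0 := by
    intro hw
    rw [hw, zero_smul, zero_eq_neg] at hstat
    have hγ_zero := Fintype.linearIndependent_iff.1 hb γ hstat
    simp [hγ_zero] at hw
  obtain rfl : t = ‖x‖ ^ 2 := mul_left_cancel₀ hw hslack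
  exact ⟨x, γ, hγ, hstat, hcompl, hdual, hxt.2⟩

lemma exists_isKKTPoint_of_span_ne_top [FiniteDimensional ℝ E]
    (hb : Submodule.span ℝ (range b) ≠ ⊤)
    (hslater : ∃ x₀, ∀ i, a i * ‖x₀‖ ^ 2 + ⟪b i, x₀⟫ + c i < 0) :
    ∃ x γ, IsKKTPoint a b c x γ := by
  obtain ⟨⟨x, t⟩, hxt, hmin⟩ := exists_isMinOn_snd_relaxedFeasibleSet
    (relaxedFeasibleSet_nonempty_of_slater hslater)
  obtain ⟨z, rfl, hz⟩ := exists_norm_sq_eq_and_inner_eq hb hxt.1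
  have hz_mem : (z, ‖z‖ ^ 2) ∈ relaxedFeasibleSet a b c :=
    ⟨le_rfl, fun i ↦ hz (b i) (Submodule.subset_span (mem_range_self i)) ▸ hxt.2 i⟩
  obtain ⟨γ, hγ, hcompl, hdual, hstat, -⟩ :=
    exists_relaxed_kkt_of_isMinOn_snd hslater hz_mem hmin
  exact ⟨z, γ, hγ, hstat, hcompl, hdual, hz_mem.2⟩

theorem exists_isKKTPoint_of_card_le_finrank [FiniteDimensional ℝ E]
    (hcard : Fintype.card ι ≤ finrank ℝ E)
    (hslater : ∃ x₀, ∀ i, a i * ‖x₀‖ ^ 2 + ⟪b i, x₀⟫ + c i < 0) :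
    ∃ x γ, IsKKTPoint a b c x γ := by
  by_cases hspan : Submodule.span ℝ (range b) = ⊤
  · refine exists_isKKTPoint_of_linearIndependent ?_ hslater
    rwa [linearIndependent_iff_card_le_finrank_span, Set.finrank, hspan, finrank_top]
  · exact exists_isKKTPoint_of_span_ne_top hspan hslater

end Relaxation

section Coordinates

variable {n : ℕ} {a1 a2 : ℝ} {b1 b2 : Fin n → ℝ} {c1 c2 : ℝ}

lemma quadratic_toLp_eq (a : ℝ) (b : Fin n → ℝ) (c : ℝ) (x : EuclideanSpace ℝ (Fin n)) :
    a * ‖x‖ ^ 2 + ⟪WithLp.toLp 2 b, x⟫ + c = a * (x.ofLp ⬝ᵥ x.ofLp) + b ⬝ᵥ x.ofLp + c := by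
  rw [← real_inner_self_eq_norm_sq, EuclideanSpace.inner_eq_star_dotProduct,
    EuclideanSpace.inner_eq_star_dotProduct, star_trivial, star_trivial, dotProduct_comm b]

lemma IsKKTPoint.isKKTP1 {x : EuclideanSpace ℝ (Fin n)} {γ : Fin 2 → ℝ}
    (h : IsKKTPoint ![a1, a2] ![WithLp.toLp 2 b1, WithLp.toLp 2 b2] ![c1, c2] x γ) :
    IsKKTP1 n a1 a2 b1 b2 c1 c2 x.ofLp (γ 0) (γ 1) := by
  obtain ⟨hγ, hstat, hcompl, hdual, hprimal⟩ := h
  have hw : 1 + 2 * ∑ i, γ i * ![a1, a2] i = 1 + 2 * γ 0 * a1 + 2 * γ 1 * a2 := by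
    simp only [Fin.sum_univ_two, cons_val_zero, cons_val_one]
    ring
  rw [hw] at hstat hdual
  simp only [Fin.forall_fin_two, cons_val_zero, cons_val_one, quadratic_toLp_eq] at hcompl hprimal
  refine ⟨hγ 0, hγ 1, ?_, hcompl.1, hcompl.2, hdual, hprimal.1, hprimal.2⟩
  simpa using congrArg WithLp.ofLp hstat

theorem exists_isKKTP1_of_one_lt (hn : 1 < n)
    (hslater : ∃ x₀ : Fin n → ℝ,
      a1 * (x₀ ⬝ᵥ x₀) + b1 ⬝ᵥ x₀ + c1 < 0 ∧ a2 * (x₀ ⬝ᵥ x₀) + b2 ⬝ᵥ x₀ + c2 < 0) :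
    ∃ x γ1 γ2, IsKKTP1 n a1 a2 b1 b2 c1 c2 x γ1 γ2 := by
  obtain ⟨x₀, h1, h2⟩ := hslater
  obtain ⟨x, γ, hK⟩ := exists_isKKTPoint_of_card_le_finrank (E := EuclideanSpace ℝ (Fin n))
    (a := ![a1, a2]) (b := ![WithLp.toLp 2 b1, WithLp.toLp 2 b2]) (c := ![c1, c2])
    (by simpa using Nat.succ_le_of_lt hn)
    ⟨WithLp.toLp 2 x₀, Fin.forall_fin_two.2
      ⟨(quadratic_toLp_eq a1 b1 c1 _).trans_lt h1, (quadratic_toLp_eq a2 b2 c2 _).trans_lt h2⟩⟩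
  exact ⟨x.ofLp, γ 0, γ 1, hK.isKKTP1⟩

lemma IsKKTP1.const_nonpos {x : Fin n → ℝ} (h : IsKKTP1 n a1 a2 b1 b2 c1 c2 x 0 0) :
    c1 ≤ 0 ∧ c2 ≤ 0 := by
  obtain ⟨-, -, hstat, -, -, -, h1, h2⟩ := h
  obtain rfl : x = 0 := by simpa using hstat
  simpa using And.intro h1 h2

end Coordinates

theorem stmt_12_general (n : ℕ) (hn : 1 < n) (a1 a2 : ℝ) (b1 b2 : Fin n → ℝ) (c1 c2 : ℝ)
    (g1 g2 : (Fin n → ℝ) → ℝ)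
    (hg1 : ∀ x, g1 x = a1 * (x ⬝ᵥ x) + b1 ⬝ᵥ x + c1)
    (hg2 : ∀ x, g2 x = a2 * (x ⬝ᵥ x) + b2 ⬝ᵥ x + c2)
    (hslater : ∃ x₀ : Fin n → ℝ, g1 x₀ < 0 ∧ g2 x₀ < 0)
    (hzero : 0 < g1 0 ∨ 0 < g2 0)
    (hno1 : ¬ ∃ (x : Fin n → ℝ) (γ1 γ2 : ℝ),
      IsKKTP1 n a1 a2 b1 b2 c1 c2 x γ1 γ2 ∧ 0 < γ1 ∧ γ2 = 0)
    (hno2 : ¬ ∃ (x : Fin n → ℝ) (γ1 γ2 : ℝ),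
      IsKKTP1 n a1 a2 b1 b2 c1 c2 x γ1 γ2 ∧ γ1 = 0 ∧ 0 < γ2) :
    ∃ (x : Fin n → ℝ) (γ1 γ2 : ℝ),
      IsKKTP1 n a1 a2 b1 b2 c1 c2 x γ1 γ2 ∧ 0 < γ1 ∧ 0 < γ2 := by
  simp only [hg1, hg2] at hslater hzero
  obtain ⟨x, γ1, γ2, hK⟩ := exists_isKKTP1_of_one_lt hn hslater
  rcases hK.1.eq_or_lt' with rfl | hγ1 <;> rcases hK.2.1.eq_or_lt' with rfl | hγ2
  · have ⟨hc1, hc2⟩ := hK.const_nonpos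
    simp only [dotProduct_zero, mul_zero, zero_add] at hzero
    exact absurd hzero (not_or.2 ⟨hc1.not_gt, hc2.not_gt⟩)
  · exact absurd ⟨x, 0, γ2, hK, rfl, hγ2⟩ hno2
  · exact absurd ⟨x, γ1, 0, hK, hγ1, rfl⟩ hno1
  · exact ⟨x, γ1, γ2, hK, hγ1, hγ2⟩

/-- If the Slater condition holds, the zero vector is infeasible, and there is no
KKT point of (P1) with exactly one positive multiplier, then there is a KKT point
with both multipliers positive. -/
theorem stmt_12 (n : ℕ) (hn : 3 < n) (a1 a2 : ℝ) (b1 b2 : Fin n → ℝ) (c1 c2 : ℝ)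
    (g1 g2 : (Fin n → ℝ) → ℝ)
    (hg1 : ∀ x, g1 x = a1 * (x ⬝ᵥ x) + b1 ⬝ᵥ x + c1)
    (hg2 : ∀ x, g2 x = a2 * (x ⬝ᵥ x) + b2 ⬝ᵥ x + c2)
    (hslater : ∃ x₀ : Fin n → ℝ, g1 x₀ < 0 ∧ g2 x₀ < 0)
    (hzero : 0 < g1 0 ∨ 0 < g2 0)
    (hno1 : ¬ ∃ (x : Fin n → ℝ) (γ1 γ2 : ℝ),
      IsKKTP1 n a1 a2 b1 b2 c1 c2 x γ1 γ2 ∧ 0 < γ1 ∧ γ2 = 0)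
    (hno2 : ¬ ∃ (x : Fin n → ℝ) (γ1 γ2 : ℝ),
      IsKKTP1 n a1 a2 b1 b2 c1 c2 x γ1 γ2 ∧ γ1 = 0 ∧ 0 < γ2) :
    ∃ (x : Fin n → ℝ) (γ1 γ2 : ℝ),
      IsKKTP1 n a1 a2 b1 b2 c1 c2 x γ1 γ2 ∧ 0 < γ1 ∧ 0 < γ2 :=
  stmt_12_general n (by omega) a1 a2 b1 b2 c1 c2 g1 g2 hg1 hg2 hslater hzero hno1 hno2
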